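/- If F ≺ (1-z)^μ on the unit disc with 0 < μ ≤ ρ ≤ 1, then F ≺ (1-z)^ρ; consequently for b ≥ max{c, 2c-1} > 0 the subordination (1-z)^ρ σ_n^{(b-1,c)}(f_μ, z) ≺ (1-z)^ρ holds for 0 < μ ≤ ρ ≤ 1. -/

import Mathlib

open Complex Metric

/-- Pochhammer symbol (rising factorial). -/
def poch (x : ℝ) (k : ℕ) : ℝ := ∏ i ∈ Finset.range k, (x + i)

/-- Cesàro normalizing constants `B_0 = 1`, `B_k = ((b)_k/(c)_k)(1+b-c)/b`. -/
noncomputable def cesB (b c : ℝ) : ℕ → ℝ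
  | 0 => 1
  | (k + 1) => (poch b (k + 1) / poch c (k + 1)) * (1 + b - c) / b

/-- `σ_n^{(b-1,c)}(f_μ, z) = Σ_{k=0}^n (B_{n-k}/B_n)((μ)_k/k!) z^k`. -/
noncomputable def sigmaMu (b c μ : ℝ) (n : ℕ) (z : ℂ) : ℂ :=
  ∑ k ∈ Finset.range (n + 1),
    (((cesB b c (n - k) / cesB b c n) * (poch μ k / (Nat.factorial k : ℝ)) : ℝ) : ℂ) * z ^ k

/-- Subordination on the unit disc. -/
def Subord (F G : ℂ → ℂ) : Prop :=
  ∃ ω : ℂ → ℂ, DifferentiableOn ℂ ω (ball (0 : ℂ) 1) ∧ ω 0 = 0 ∧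
    (∀ z ∈ ball (0 : ℂ) 1, ω z ∈ ball (0 : ℂ) 1) ∧
    ∀ z ∈ ball (0 : ℂ) 1, F z = G (ω z)

/-!
Write `D` for the disc `|u - 1| < 1`. Its image `log D` is convex: it is
`{|Im w| < π / 2, exp (Re w) < 2 cos (Im w)}`, where `exp` is convex and the cosine is concave.
As `0 ∈ log D`, scaling by `μ / ρ ≤ 1` maps `log D` into itself, which gives
`(1 - z) ^ μ ≺ (1 - z) ^ ρ`. Likewise, if `(1 - z) ^ μ P(z) ∈ D ^ μ`, then
`log ((1 - z) ^ ρ P(z)) / ρ` is the convex combination of `log (1 - z)` and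
`log ((1 - z) ^ μ P(z)) / μ` with weights `1 - μ / ρ` and `μ / ρ`, so it lies in `log D` and
`(1 - z) ^ ρ P(z) ≺ (1 - z) ^ ρ`.

It remains to see that `(1 - z) ^ μ σ_n(z) ∈ D ^ μ`. For the Taylor polynomials `S_n` of
`(1 - z) ^ (-μ)`, the derivative of `1 - (1 - z) S_n ^ (1 / μ)` is a positive multiple of
`z ^ n S_n ^ (1 / μ - 1)`. Because `S_n` has positive coefficients, integration along rays gives
`|1 - (1 - z) S_n(z) ^ (1 / μ)| ≤ 1 - (1 - |z|) S_n(|z|) ^ (1 / μ) < 1`, that is,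
`(1 - z) ^ μ S_n(z) ∈ D ^ μ`. The Cesàro weights decrease, so Abel summation makes `σ_n` a convex
combination of `S_0, …, S_n`, and `D ^ μ` is convex for `μ ≤ 1`, being the intersection of a sector
with the supporting half-planes at its boundary points.
-/

section Geometry

open scoped Real

theorem mem_ball_one_iff_norm_lt {u : ℂ} :
    u ∈ ball (1 : ℂ) 1 ↔ u ≠ 0 ∧ ‖u‖ < 2 * Real.cos u.arg := by
  have hsq : ‖u - 1‖ ^ 2 = 1 + ‖u‖ * (‖u‖ - 2 * Real.cos u.arg) := by
    rw [mul_sub, mul_left_comm, norm_mul_cos_arg, ← normSq_eq_norm_sq, ← sq, ← normSq_eq_norm_sq,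
      normSq_apply, normSq_apply]
    simp only [sub_re, sub_im, one_re, one_im]
    ring
  rw [mem_ball_iff_norm, ← sq_lt_one_iff₀ (norm_nonneg _), hsq, add_lt_iff_neg_left]
  rcases eq_or_ne u 0 with rfl | hu
  · simp
  · rw [mul_sub, sub_neg, mul_lt_mul_iff_right₀ (norm_pos_iff.2 hu), and_iff_right hu]

theorem re_pos_of_mem_ball_one {u : ℂ} (hu : u ∈ ball (1 : ℂ) 1) : 0 < u.re := by
  obtain ⟨hu0, hlt⟩ := mem_ball_one_iff_norm_lt.1 hu
  have hcos : 0 < Real.cos u.arg := by linarith [norm_nonneg u]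
  exact norm_mul_cos_arg u ▸ mul_pos (norm_pos_iff.2 hu0) hcos

theorem one_sub_mem_ball_one {z : ℂ} (hz : z ∈ ball (0 : ℂ) 1) : 1 - z ∈ ball (1 : ℂ) 1 := by
  simpa [mem_ball_iff_norm] using hz

theorem differentiableOn_log_one_sub :
    DifferentiableOn ℂ (fun z : ℂ => Complex.log (1 - z)) (ball 0 1) :=
  DifferentiableOn.clog (by fun_prop) fun _ hz =>
    .inl (re_pos_of_mem_ball_one (one_sub_mem_ball_one hz))

theorem one_sub_ne_zero_of_mem_ball {z : ℂ} (hz : z ∈ ball (0 : ℂ) 1) : 1 - z ≠ 0 :=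
  (mem_ball_one_iff_norm_lt.1 (one_sub_mem_ball_one hz)).1

/-- The image of the disc `|u - 1| < 1` under the principal logarithm. Its convexity is what lets
powers of the disc be compared. -/
def logDisc : Set ℂ := Complex.log '' ball 1 1

theorem log_exp_of_abs_im_lt {w : ℂ} (hw : |w.im| < π / 2) : Complex.log (Complex.exp w) = w := by
  obtain ⟨h₁, h₂⟩ := abs_lt.1 hw
  exact log_exp (by linarith [Real.pi_pos]) (by linarith [Real.pi_pos])

theorem mem_logDisc_iff {w : ℂ} :
    w ∈ logDisc ↔ |w.im| < π / 2 ∧ Real.exp w.re < 2 * Real.cos w.im := by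
  constructor
  · rintro ⟨u, hu, rfl⟩
    obtain ⟨hu0, hlt⟩ := mem_ball_one_iff_norm_lt.1 hu
    rw [log_im, log_re, Real.exp_log (norm_pos_iff.2 hu0)]
    exact ⟨abs_arg_lt_pi_div_two_iff.2 (.inl (re_pos_of_mem_ball_one hu)), hlt⟩
  · rintro ⟨him, hlt⟩
    have hlog := log_exp_of_abs_im_lt him
    refine ⟨Complex.exp w, mem_ball_one_iff_norm_lt.2 ⟨exp_ne_zero w, ?_⟩, hlog⟩
    rwa [norm_exp, ← log_im, hlog]

theorem exp_mem_ball_one {w : ℂ} (hw : w ∈ logDisc) : Complex.exp w ∈ ball (1 : ℂ) 1 := by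
  obtain ⟨u, hu, rfl⟩ := hw
  rwa [exp_log (mem_ball_one_iff_norm_lt.1 hu).1]

theorem log_exp_of_mem_logDisc {w : ℂ} (hw : w ∈ logDisc) :
    Complex.log (Complex.exp w) = w :=
  log_exp_of_abs_im_lt (mem_logDisc_iff.1 hw).1

theorem zero_mem_logDisc : (0 : ℂ) ∈ logDisc :=
  ⟨1, mem_ball_self one_pos, log_one⟩

theorem convex_logDisc : Convex ℝ logDisc := by
  have hexp : ConvexOn ℝ Set.univ (fun w : ℂ => Real.exp w.re) :=
    convexOn_exp.comp_linearMap reLm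
  have hcos : ConcaveOn ℝ (imLm ⁻¹' Set.Icc (-(π / 2)) (π / 2)) (fun w : ℂ => Real.cos w.im) :=
    strictConcaveOn_cos_Icc.concaveOn.comp_linearMap imLm
  have hstrip : Convex ℝ (imLm ⁻¹' Set.Ioo (-(π / 2)) (π / 2)) :=
    (convex_Ioo _ _).is_linear_preimage imLm.isLinear
  have hsub := (hexp.subset (Set.subset_univ _) hstrip).sub
    ((hcos.subset (Set.preimage_mono Set.Ioo_subset_Icc_self) hstrip).smul zero_le_two)
  have heq : logDisc = {w | w ∈ imLm ⁻¹' Set.Ioo (-(π / 2)) (π / 2) ∧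
      Real.exp w.re - 2 * Real.cos w.im < 0} := by
    ext w
    simp [mem_logDisc_iff, abs_lt]
  rw [heq]
  simpa only [Pi.sub_apply, smul_eq_mul] using hsub.convex_lt 0

/-- The image of the disc `|u - 1| < 1` under `u ↦ u ^ μ` (principal branch), that is, the image of
the unit disc under `z ↦ (1 - z) ^ μ`. -/
def powDisc (μ : ℝ) : Set ℂ := (fun u => u ^ (μ : ℂ)) '' ball 1 1

theorem mem_powDisc_iff {μ : ℝ} (hμ : 0 < μ) (hμ₁ : μ ≤ 1) {p : ℂ} :
    p ∈ powDisc μ ↔ p ≠ 0 ∧ Complex.log p / μ ∈ logDisc := by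
  have hμ' : (μ : ℂ) ≠ 0 := ofReal_ne_zero.2 hμ.ne'
  constructor
  · rintro ⟨u, hu, rfl⟩
    have hu0 := (mem_ball_one_iff_norm_lt.1 hu).1
    have harg := abs_lt.1 (abs_arg_lt_pi_div_two_iff.2 (.inl (re_pos_of_mem_ball_one hu)))
    have him : |(Complex.log u * μ).im| < π / 2 := by
      rw [im_mul_ofReal, log_im, abs_lt]
      constructor <;> nlinarith
    simp only [cpow_def_of_ne_zero hu0]
    refine ⟨exp_ne_zero _, ?_⟩
    rw [log_exp_of_abs_im_lt him, mul_div_cancel_right₀ _ hμ']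
    exact ⟨u, hu, rfl⟩
  · rintro ⟨hp, hlog⟩
    refine ⟨_, exp_mem_ball_one hlog, ?_⟩
    simp only [cpow_def_of_ne_zero (exp_ne_zero _), log_exp_of_mem_logDisc hlog,
      div_mul_cancel₀ _ hμ', exp_log hp]

theorem mem_powDisc_iff_polar {μ : ℝ} (hμ : 0 < μ) (hμ₁ : μ ≤ 1) {p : ℂ} :
    p ∈ powDisc μ ↔
      p ≠ 0 ∧ |p.arg| < μ * (π / 2) ∧ ‖p‖ < (2 * Real.cos (p.arg / μ)) ^ μ := by
  rw [mem_powDisc_iff hμ hμ₁, mem_logDisc_iff, div_ofReal_im, div_ofReal_re, log_im, log_re,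
    abs_div, abs_of_pos hμ, div_lt_iff₀' hμ]
  refine and_congr_right fun hp => and_congr_right fun harg => ?_
  have hp' := norm_pos_iff.2 hp
  have hcos : 0 ≤ 2 * Real.cos (p.arg / μ) := by
    refine mul_nonneg zero_le_two (Real.cos_nonneg_of_mem_Icc (abs_le.1 ?_))
    rw [abs_div, abs_of_pos hμ, div_le_iff₀' hμ]
    exact harg.le
  rw [div_eq_mul_inv, Real.exp_mul, Real.exp_log hp',
    Real.rpow_inv_lt_iff_of_pos hp'.le hcos hμ]

theorem abs_arg_lt_iff {β : ℝ} (hβ : 0 < β) (hβ' : β ≤ π / 2) {w : ℂ} (hw : w ≠ 0) :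
    |w.arg| < β ↔ |w.im| * Real.cos β < w.re * Real.sin β := by
  have hdiff : w.re * Real.sin β - |w.im| * Real.cos β = ‖w‖ * Real.sin (β - |w.arg|) := by
    rw [← norm_mul_cos_arg, ← norm_mul_sin_arg, abs_mul, abs_norm,
      Real.abs_sin_eq_sin_abs_of_abs_le_pi (abs_arg_le_pi w), Real.sin_sub, Real.cos_abs]
    ring
  rw [← sub_pos (b := |w.im| * _), hdiff, mul_pos_iff_of_pos_left (norm_pos_iff.2 hw)]
  refine ⟨fun h => Real.sin_pos_of_pos_of_lt_pi (by linarith)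
    (by linarith [abs_nonneg w.arg, Real.pi_pos]), fun h => ?_⟩
  by_contra! hle
  exact h.not_ge (Real.sin_nonpos_of_nonpos_of_neg_pi_le (by linarith)
    (by linarith [abs_arg_le_pi w]))

theorem cos_rpow_mul_cos_rpow_le {s t x y : ℝ} (hs : 0 ≤ s) (ht : 0 ≤ t) (hst : s + t = 1)
    (hx : |x| ≤ π / 2) (hy : |y| ≤ π / 2) :
    Real.cos x ^ s * Real.cos y ^ t ≤ Real.cos (s * x + t * y) :=
  calc Real.cos x ^ s * Real.cos y ^ t
    _ ≤ s * Real.cos x + t * Real.cos y :=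
      Real.geom_mean_le_arith_mean2_weighted hs ht (Real.cos_nonneg_of_mem_Icc (abs_le.1 hx))
        (Real.cos_nonneg_of_mem_Icc (abs_le.1 hy)) hst
    _ ≤ Real.cos (s * x + t * y) :=
      strictConcaveOn_cos_Icc.concaveOn.2 (abs_le.1 hx) (abs_le.1 hy) hs ht hst

theorem cos_rpow_mul_cos_sub_le {μ θ ψ : ℝ} (hμ : 0 < μ) (hμ₁ : μ ≤ 1) (hθ : |θ| < π / 2)
    (hψ : |ψ| < π / 2) :
    Real.cos ψ ^ μ * Real.cos ((1 + μ) * θ - μ * ψ) ≤ Real.cos θ ^ μ * Real.cos θ := by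
  have hcosθ : 0 < Real.cos θ := Real.cos_pos_of_mem_Ioo (abs_lt.1 hθ)
  have hcosψ : 0 < Real.cos ψ := Real.cos_pos_of_mem_Ioo (abs_lt.1 hψ)
  set η := (1 + μ) * θ - μ * ψ with hη
  rcases le_or_gt (Real.cos η) 0 with hcosη | hcosη
  · exact (mul_nonpos_of_nonneg_of_nonpos (by positivity) hcosη).trans (by positivity)
  have hη_lt : |η| < π / 2 := by
    have hη' : |η| ≤ π + π / 2 := by
      rw [abs_lt] at hθ hψ
      rw [abs_le]
      constructor <;> nlinarith
    by_contra! hge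
    exact hcosη.not_ge
      (Real.cos_abs η ▸ Real.cos_nonpos_of_pi_div_two_le_of_le hge (by linarith))
  -- `θ` is the weighted mean of `ψ` and `η` with weights `μ / (1 + μ)` and `1 / (1 + μ)`.
  have hmean := cos_rpow_mul_cos_rpow_le (s := μ / (1 + μ)) (t := 1 / (1 + μ)) (by positivity)
    (by positivity) (by field_simp; ring) hψ.le hη_lt.le
  have hθ_eq : μ / (1 + μ) * ψ + 1 / (1 + μ) * η = θ := by
    rw [hη]
    field_simp
    ring
  have hpow := Real.rpow_le_rpow (by positivity) (hθ_eq ▸ hmean) (by positivity : 0 ≤ 1 + μ)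
  rwa [Real.mul_rpow (by positivity) (by positivity), ← Real.rpow_mul hcosψ.le,
    ← Real.rpow_mul hcosη.le, div_mul_cancel₀ _ (by positivity), div_mul_cancel₀ _ (by positivity),
    Real.rpow_one, add_comm 1 μ, Real.rpow_add_one hcosθ.ne'] at hpow

theorem re_mul_cos_add_im_mul_sin (w : ℂ) (α : ℝ) :
    w.re * Real.cos α + w.im * Real.sin α = ‖w‖ * Real.cos (α - w.arg) := by
  rw [← norm_mul_cos_arg, ← norm_mul_sin_arg, Real.cos_sub]
  ring

theorem re_mul_cos_add_im_mul_sin_lt_of_mem_powDisc {μ θ : ℝ} (hμ : 0 < μ) (hμ₁ : μ ≤ 1)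
    (hθ : |θ| < π / 2) {p : ℂ} (hp : p ∈ powDisc μ) :
    p.re * Real.cos ((1 + μ) * θ) + p.im * Real.sin ((1 + μ) * θ) <
      (2 * Real.cos θ) ^ μ * Real.cos θ := by
  obtain ⟨-, harg, hnorm⟩ := (mem_powDisc_iff_polar hμ hμ₁).1 hp
  have hcosθ : 0 < Real.cos θ := Real.cos_pos_of_mem_Ioo (abs_lt.1 hθ)
  set ψ := p.arg / μ with hψ_def
  have hψ : |ψ| < π / 2 := by rwa [hψ_def, abs_div, abs_of_pos hμ, div_lt_iff₀' hμ]
  have hcosψ : 0 < Real.cos ψ := Real.cos_pos_of_mem_Ioo (abs_lt.1 hψ)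
  have harg_eq : p.arg = μ * ψ := (mul_div_cancel₀ _ hμ.ne').symm
  rw [re_mul_cos_add_im_mul_sin, harg_eq]
  rcases le_or_gt (Real.cos ((1 + μ) * θ - μ * ψ)) 0 with hcos | hcos
  · exact (mul_nonpos_of_nonneg_of_nonpos (norm_nonneg p) hcos).trans_lt (by positivity)
  calc ‖p‖ * Real.cos ((1 + μ) * θ - μ * ψ)
    _ < (2 * Real.cos ψ) ^ μ * Real.cos ((1 + μ) * θ - μ * ψ) := by gcongr
    _ = 2 ^ μ * (Real.cos ψ ^ μ * Real.cos ((1 + μ) * θ - μ * ψ)) := by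
      rw [Real.mul_rpow zero_le_two hcosψ.le, mul_assoc]
    _ ≤ 2 ^ μ * (Real.cos θ ^ μ * Real.cos θ) := by
      exact mul_le_mul_of_nonneg_left (cos_rpow_mul_cos_sub_le hμ hμ₁ hθ hψ) (by positivity)
    _ = (2 * Real.cos θ) ^ μ * Real.cos θ := by
      rw [Real.mul_rpow zero_le_two hcosθ.le, mul_assoc]

-- The boundary of `powDisc μ` is `φ = μ θ`, `r = (2 cos θ) ^ μ` in polar coordinates, with outward
-- normal direction `(1 + μ) θ` at parameter `θ`.
theorem mem_powDisc_iff_support {μ : ℝ} (hμ : 0 < μ) (hμ₁ : μ ≤ 1) {p : ℂ} :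
    p ∈ powDisc μ ↔
      |p.im| * Real.cos (μ * (π / 2)) < p.re * Real.sin (μ * (π / 2)) ∧
      ∀ θ : ℝ, |θ| < π / 2 → p.re * Real.cos ((1 + μ) * θ) + p.im * Real.sin ((1 + μ) * θ) <
        (2 * Real.cos θ) ^ μ * Real.cos θ := by
  have hβ : 0 < μ * (π / 2) := by positivity
  have hβ' : μ * (π / 2) ≤ π / 2 := mul_le_of_le_one_left (by positivity) hμ₁
  constructor
  · intro hp
    obtain ⟨hp0, harg, -⟩ := (mem_powDisc_iff_polar hμ hμ₁).1 hp
    exact ⟨(abs_arg_lt_iff hβ hβ' hp0).1 harg,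
      fun θ hθ => re_mul_cos_add_im_mul_sin_lt_of_mem_powDisc hμ hμ₁ hθ hp⟩
  · rintro ⟨hsector, hsupport⟩
    have hp0 : p ≠ 0 := by
      rintro rfl
      simp at hsector
    have harg := (abs_arg_lt_iff hβ hβ' hp0).2 hsector
    refine (mem_powDisc_iff_polar hμ hμ₁).2 ⟨hp0, harg, ?_⟩
    have hθ : |p.arg / μ| < π / 2 := by rwa [abs_div, abs_of_pos hμ, div_lt_iff₀' hμ]
    have hangle : (1 + μ) * (p.arg / μ) - p.arg = p.arg / μ := by
      field_simp
      ring
    have hlt := hsupport _ hθ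
    rw [re_mul_cos_add_im_mul_sin, hangle] at hlt
    exact lt_of_mul_lt_mul_right hlt (Real.cos_pos_of_mem_Ioo (abs_lt.1 hθ)).le

theorem convex_powDisc {μ : ℝ} (hμ : 0 < μ) (hμ₁ : μ ≤ 1) : Convex ℝ (powDisc μ) := by
  have hhalf (a b r : ℝ) : Convex ℝ {p : ℂ | p.re * a + p.im * b < r} := by
    simpa [mul_comm] using convex_halfSpace_lt (a • reLm + b • imLm).isLinear r
  have hcos : 0 ≤ Real.cos (μ * (π / 2)) :=
    Real.cos_nonneg_of_mem_Icc ⟨by nlinarith [Real.pi_pos], by nlinarith [Real.pi_pos]⟩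
  have hsector : Convex ℝ
      {p : ℂ | |p.im| * Real.cos (μ * (π / 2)) < p.re * Real.sin (μ * (π / 2))} := by
    convert (hhalf (-Real.sin (μ * (π / 2))) (-Real.cos (μ * (π / 2))) 0).inter
      (hhalf (-Real.sin (μ * (π / 2))) (Real.cos (μ * (π / 2))) 0) using 1
    ext p
    simp only [Set.mem_inter_iff, Set.mem_ofPred_eq]
    rw [← abs_of_nonneg hcos, ← abs_mul, abs_of_nonneg hcos, abs_lt]
    constructor <;> rintro ⟨h₁, h₂⟩ <;> constructor <;> linarith
  have heq : powDisc μ =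
      {p : ℂ | |p.im| * Real.cos (μ * (π / 2)) < p.re * Real.sin (μ * (π / 2))} ∩
        ⋂ (θ : ℝ) (_ : |θ| < π / 2),
          {p : ℂ | p.re * Real.cos ((1 + μ) * θ) + p.im * Real.sin ((1 + μ) * θ) <
            (2 * Real.cos θ) ^ μ * Real.cos θ} := by
    ext p
    simp [mem_powDisc_iff_support hμ hμ₁]
  exact heq ▸ hsector.inter (convex_iInter₂ fun _ _ => hhalf _ _ _)

theorem re_pos_of_mem_powDisc {μ : ℝ} (hμ : 0 < μ) (hμ₁ : μ ≤ 1) {p : ℂ} (hp : p ∈ powDisc μ) :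
    0 < p.re := by
  obtain ⟨hp0, harg, -⟩ := (mem_powDisc_iff_polar hμ hμ₁).1 hp
  have hlt : |p.arg| < π / 2 := by nlinarith [Real.pi_pos]
  exact (abs_arg_lt_pi_div_two_iff.1 hlt).resolve_right hp0

end Geometry

section General

theorem sum_smul_mem_of_antitoneOn {𝕜 E : Type*} [Field 𝕜] [LinearOrder 𝕜] [IsStrictOrderedRing 𝕜]
    [AddCommGroup E] [Module 𝕜 E] {K : Set E} (hK : Convex 𝕜 K) {c : ℕ → 𝕜} {x : ℕ → E} {n : ℕ}
    (hc₀ : c 0 = 1) (hc : AntitoneOn c (Set.Iic n)) (hn : 0 ≤ c n)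
    (hx : ∀ j ≤ n, ∑ k ∈ Finset.range (j + 1), x k ∈ K) :
    ∑ k ∈ Finset.range (n + 1), c k • x k ∈ K := by
  set d : ℕ → 𝕜 := fun k => if k ≤ n then c k else 0 with hd
  have hd_of_le {k : ℕ} (hk : k ≤ n) : d k = c k := if_pos hk
  have hd_last : d (n + 1) = 0 := if_neg (by lia)
  have habel : ∑ k ∈ Finset.range (n + 1), c k • x k =
      ∑ j ∈ Finset.range (n + 1), (d j - d (j + 1)) • ∑ k ∈ Finset.range (j + 1), x k := by
    have hparts := Finset.sum_range_by_parts d x (n + 2)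
    rw [Finset.sum_range_succ, Nat.add_sub_cancel_right (n := n + 1) (m := 1), hd_last, zero_smul,
      zero_smul, add_zero, zero_sub, ← Finset.sum_neg_distrib] at hparts
    simp only [← neg_smul, neg_sub] at hparts
    rw [← hparts]
    exact Finset.sum_congr rfl fun k hk => by rw [hd_of_le (Finset.mem_range_succ_iff.1 hk)]
  rw [habel]
  refine hK.sum_mem (fun j hj => ?_) ?_ fun j hj => hx j (Finset.mem_range_succ_iff.1 hj)
  · have hjn := Finset.mem_range_succ_iff.1 hj
    rw [hd_of_le hjn, sub_nonneg]
    rcases hjn.eq_or_lt with rfl | hlt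
    · rwa [hd_last]
    · rw [hd_of_le hlt]
      exact hc hjn hlt j.le_succ
  · rw [Finset.sum_range_sub', hd_last, hd_of_le n.zero_le, hc₀, sub_zero]

theorem norm_le_of_norm_deriv_le_radial {E : Type*} [NormedAddCommGroup E] [NormedSpace ℂ E]
    {f f' : ℂ → E} {g g' : ℝ → ℝ} {R : ℝ} (hf : ∀ w ∈ ball (0 : ℂ) R, HasDerivAt f (f' w) w)
    (hg : ∀ r ∈ Set.Ico 0 R, HasDerivAt g (g' r) r) (h₀ : ‖f 0‖ ≤ g 0)
    (hle : ∀ w ∈ ball (0 : ℂ) R, ‖f' w‖ ≤ g' ‖w‖) {z : ℂ} (hz : z ∈ ball (0 : ℂ) R) :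
    ‖f z‖ ≤ g ‖z‖ := by
  have hz' : ‖z‖ < R := mem_ball_zero_iff.1 hz
  have hnorm {t : ℝ} (ht : t ∈ Set.Icc (0 : ℝ) 1) : ‖(t : ℂ) * z‖ = t * ‖z‖ := by
    rw [norm_mul, Complex.norm_of_nonneg ht.1]
  have hlt {t : ℝ} (ht : t ∈ Set.Icc (0 : ℝ) 1) : t * ‖z‖ < R :=
    (mul_le_of_le_one_left (norm_nonneg z) ht.2).trans_lt hz'
  have hmem {t : ℝ} (ht : t ∈ Set.Icc (0 : ℝ) 1) : (t : ℂ) * z ∈ ball (0 : ℂ) R := by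
    rw [mem_ball_zero_iff, hnorm ht]
    exact hlt ht
  have hfray (t : ℝ) (ht : t ∈ Set.Icc (0 : ℝ) 1) :
      HasDerivAt (fun t : ℝ => f (t * z)) (z • f' (t * z)) t := by
    have hray : HasDerivAt (fun t : ℝ => (t : ℂ) * z) z t := by
      simpa using (ofRealCLM.hasDerivAt (x := t)).mul_const z
    exact (hf _ (hmem ht)).scomp t hray
  have hgray (t : ℝ) (ht : t ∈ Set.Icc (0 : ℝ) 1) :
      HasDerivAt (fun t : ℝ => g (t * ‖z‖)) (g' (t * ‖z‖) * ‖z‖) t :=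
    (hg _ ⟨mul_nonneg ht.1 (norm_nonneg z), hlt ht⟩).comp t (hasDerivAt_mul_const ‖z‖)
  have hbound := image_norm_le_of_norm_deriv_right_le_deriv_boundary' (a := 0) (b := 1)
    (fun t ht => (hfray t ht).continuousAt.continuousWithinAt)
    (fun t ht => (hfray t (Set.Ico_subset_Icc_self ht)).hasDerivWithinAt) (by simpa using h₀)
    (fun t ht => (hgray t ht).continuousAt.continuousWithinAt)
    (fun t ht => (hgray t (Set.Ico_subset_Icc_self ht)).hasDerivWithinAt)
    (fun t ht => by
      have ht' := Set.Ico_subset_Icc_self ht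
      rw [norm_smul, mul_comm, ← hnorm ht']
      exact mul_le_mul_of_nonneg_right (hle _ (hmem ht')) (norm_nonneg z))
    (Set.right_mem_Icc.2 zero_le_one)
  simpa using hbound

theorem eqOn_log_exp {U : Set ℂ} (hU : IsOpen U) (hU' : IsPreconnected U) {f : ℂ → ℂ}
    (hf : DifferentiableOn ℂ f U) (hslit : ∀ z ∈ U, Complex.exp (f z) ∈ slitPlane) {z₀ : ℂ}
    (hz₀ : z₀ ∈ U) (h₀ : Complex.log (Complex.exp (f z₀)) = f z₀) :
    Set.EqOn (fun z => Complex.log (Complex.exp (f z))) f U := by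
  refine hU.eqOn_of_deriv_eq hU' (hf.cexp.clog hslit) hf (fun z hz => ?_) hz₀ h₀
  have hderiv := (hf.differentiableAt (hU.mem_nhds hz)).hasDerivAt
  rw [(hderiv.cexp.clog (hslit z hz)).deriv, mul_div_cancel_left₀ _ (exp_ne_zero _)]

theorem mem_slitPlane_of_re_mul_pos {a s : ℂ} (ha : 0 < a.re) (has : 0 < (a * s).re) :
    s ∈ slitPlane := by
  rw [mem_slitPlane_iff_not_le_zero, nonpos_iff]
  rintro ⟨hre, him⟩
  rw [mul_re, him, mul_zero, sub_zero] at has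
  exact has.not_ge (mul_nonpos_of_nonneg_of_nonpos ha.le hre)

open Polynomial in
theorem norm_aeval_le_eval_norm {A : Type*} [NormedRing A] [NormedAlgebra ℝ A] [NormOneClass A]
    {p : ℝ[X]} (hp : ∀ k, 0 ≤ p.coeff k) (a : A) : ‖aeval a p‖ ≤ p.eval ‖a‖ := by
  rw [aeval_eq_sum_range, eval_eq_sum_range]
  refine norm_sum_le_of_le _ fun k _ => ?_
  rw [norm_smul, Real.norm_of_nonneg (hp k)]
  exact mul_le_mul_of_nonneg_left (norm_pow_le a k) (hp k)

end General

section Taylor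

open Polynomial

theorem poch_succ (x : ℝ) (k : ℕ) : poch x (k + 1) = poch x k * (x + k) :=
  Finset.prod_range_succ _ k

theorem poch_pos {x : ℝ} (hx : 0 < x) (k : ℕ) : 0 < poch x k :=
  Finset.prod_pos fun _ _ => by positivity

/-- The Taylor coefficient `(μ)_k / k!` of `f_μ(z) = (1 - z) ^ (-μ)`. -/
noncomputable def taylorCoeff (μ : ℝ) (k : ℕ) : ℝ := poch μ k / (Nat.factorial k : ℝ)

theorem taylorCoeff_zero (μ : ℝ) : taylorCoeff μ 0 = 1 := by simp [taylorCoeff, poch]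

theorem taylorCoeff_pos {μ : ℝ} (hμ : 0 < μ) (k : ℕ) : 0 < taylorCoeff μ k :=
  div_pos (poch_pos hμ k) (by positivity)

theorem succ_mul_taylorCoeff_succ (μ : ℝ) (k : ℕ) :
    ((k : ℝ) + 1) * taylorCoeff μ (k + 1) = (μ + k) * taylorCoeff μ k := by
  rw [taylorCoeff, taylorCoeff, poch_succ, Nat.factorial_succ, Nat.cast_mul, Nat.cast_succ]
  field_simp

theorem antitone_taylorCoeff {μ : ℝ} (hμ : 0 < μ) (hμ₁ : μ ≤ 1) : Antitone (taylorCoeff μ) := by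
  refine antitone_nat_of_succ_le fun k => ?_
  have hk : (0 : ℝ) < k + 1 := by positivity
  refine le_of_mul_le_mul_left ?_ hk
  rw [succ_mul_taylorCoeff_succ]
  exact mul_le_mul_of_nonneg_right (by linarith) (taylorCoeff_pos hμ k).le

/-- The Taylor polynomial of degree `n` of `f_μ(z) = (1 - z) ^ (-μ)`, kept as a real polynomial so
that it can be evaluated at complex and at real points alike. -/
noncomputable def taylorPoly (μ : ℝ) (n : ℕ) : ℝ[X] :=
  ∑ k ∈ Finset.range (n + 1), C (taylorCoeff μ k) * X ^ k

theorem aeval_taylorPoly {A : Type*} [Ring A] [Algebra ℝ A] (μ : ℝ) (n : ℕ) (a : A) :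
    aeval a (taylorPoly μ n) = ∑ k ∈ Finset.range (n + 1), taylorCoeff μ k • a ^ k := by
  simp [taylorPoly, Algebra.smul_def]

theorem aeval_zero_taylorPoly {A : Type*} [Ring A] [Algebra ℝ A] (μ : ℝ) (n : ℕ) :
    aeval (0 : A) (taylorPoly μ n) = 1 := by
  simp [aeval_taylorPoly, Finset.sum_range_succ', taylorCoeff_zero]

theorem coeff_taylorPoly_nonneg {μ : ℝ} (hμ : 0 < μ) (n k : ℕ) : 0 ≤ (taylorPoly μ n).coeff k := by
  simp only [taylorPoly, finsetSum_coeff, coeff_C_mul_X_pow]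
  exact Finset.sum_nonneg fun j _ => by split_ifs <;> simp [(taylorCoeff_pos hμ j).le]

theorem eval_taylorPoly_pos {μ : ℝ} (hμ : 0 < μ) (n : ℕ) {r : ℝ} (hr : 0 ≤ r) :
    0 < (taylorPoly μ n).eval r := by
  rw [← coe_aeval_eq_eval, aeval_taylorPoly]
  refine Finset.sum_pos' (fun k _ => ?_) ⟨0, by simp, by simp [taylorCoeff_zero]⟩
  exact mul_nonneg (taylorCoeff_pos hμ k).le (pow_nonneg hr k)

-- The truncation of `(1 - z) f_μ' = μ f_μ`.
theorem one_sub_X_mul_derivative_taylorPoly (μ : ℝ) (n : ℕ) :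
    (1 - X) * derivative (taylorPoly μ n) =
      C μ * taylorPoly μ n - C ((μ + n) * taylorCoeff μ n) * X ^ n := by
  induction n with
  | zero => simp [taylorPoly, taylorCoeff_zero]
  | succ n ih =>
    have hsucc : taylorPoly μ (n + 1) =
        taylorPoly μ n + C (taylorCoeff μ (n + 1)) * X ^ (n + 1) :=
      Finset.sum_range_succ _ (n + 1)
    have hcoeff := congrArg (C : ℝ → ℝ[X]) (succ_mul_taylorCoeff_succ μ n)
    rw [hsucc, derivative_add, mul_add, ih, derivative_C_mul_X_pow]
    simp only [map_mul, map_add, Nat.cast_add, Nat.cast_one, map_one, Nat.add_sub_cancel]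
      at hcoeff ⊢
    linear_combination X ^ n * hcoeff

theorem one_sub_mul_aeval_derivative_taylorPoly {A : Type*} [CommRing A] [Algebra ℝ A] (μ : ℝ)
    (n : ℕ) (a : A) :
    (1 - a) * aeval a (derivative (taylorPoly μ n)) = algebraMap ℝ A μ * aeval a (taylorPoly μ n) -
      algebraMap ℝ A ((μ + n) * taylorCoeff μ n) * a ^ n := by
  simpa only [map_sub, map_mul, map_one, map_pow, aeval_X, aeval_C] using
    congrArg (aeval a) (one_sub_X_mul_derivative_taylorPoly μ n)

theorem one_sub_mul_aeval_taylorPoly_mem_ball {μ : ℝ} (hμ : 0 < μ) (hμ₁ : μ ≤ 1) (n : ℕ) {z : ℂ}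
    (hz : z ∈ ball (0 : ℂ) 1) : (1 - z) * aeval z (taylorPoly μ n) ∈ ball (1 : ℂ) 1 := by
  rw [aeval_taylorPoly, Finset.mul_sum]
  simp only [mul_smul_comm]
  refine sum_smul_mem_of_antitoneOn (convex_ball 1 1) (taylorCoeff_zero μ)
    ((antitone_taylorCoeff hμ hμ₁).antitoneOn _) (taylorCoeff_pos hμ n).le fun j _ => ?_
  rw [← Finset.mul_sum, mul_neg_geom_sum, mem_ball_iff_norm, sub_sub_cancel_left, norm_neg,
    norm_pow]
  exact pow_lt_one₀ (norm_nonneg z) (mem_ball_zero_iff.1 hz) j.succ_ne_zero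

theorem aeval_taylorPoly_mem_slitPlane {μ : ℝ} (hμ : 0 < μ) (hμ₁ : μ ≤ 1) (n : ℕ) {z : ℂ}
    (hz : z ∈ ball (0 : ℂ) 1) : aeval z (taylorPoly μ n) ∈ slitPlane :=
  mem_slitPlane_of_re_mul_pos (re_pos_of_mem_ball_one (one_sub_mem_ball_one hz))
    (re_pos_of_mem_ball_one (one_sub_mul_aeval_taylorPoly_mem_ball hμ hμ₁ n hz))

theorem hasDerivAt_one_sub_mul_taylorPoly_cpow {μ : ℝ} (hμ : μ ≠ 0) {n : ℕ} {z : ℂ}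
    (hz : aeval z (taylorPoly μ n) ∈ slitPlane) :
    HasDerivAt (fun w : ℂ => 1 - (1 - w) * aeval w (taylorPoly μ n) ^ ((μ⁻¹ : ℝ) : ℂ))
      ((μ⁻¹ * ((μ + n) * taylorCoeff μ n) : ℝ) * z ^ n *
        aeval z (taylorPoly μ n) ^ ((μ⁻¹ - 1 : ℝ) : ℂ)) z := by
  have hroot := ((taylorPoly μ n).hasDerivAt_aeval z).cpow_const (c := ((μ⁻¹ : ℝ) : ℂ)) hz
  have hode := one_sub_mul_aeval_derivative_taylorPoly μ n z
  have hpow : aeval z (taylorPoly μ n) ^ ((μ⁻¹ : ℝ) : ℂ) =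
      aeval z (taylorPoly μ n) ^ ((μ⁻¹ : ℝ) - 1 : ℂ) * aeval z (taylorPoly μ n) := by
    rw [cpow_sub _ _ (slitPlane_ne_zero hz), cpow_one, div_mul_cancel₀ _ (slitPlane_ne_zero hz)]
  have hμ' : (μ : ℂ) ≠ 0 := ofReal_ne_zero.2 hμ
  refine ((((hasDerivAt_id z).const_sub 1).mul hroot).const_sub 1).congr_deriv ?_
  simp only [id_eq, coe_algebraMap] at hode ⊢
  rw [hpow]
  push_cast at hode ⊢
  generalize aeval z (taylorPoly μ n) ^ ((μ : ℂ)⁻¹ - 1) = Q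
  field_simp
  linear_combination -Q * hode

theorem hasDerivAt_one_sub_mul_taylorPoly_rpow {μ : ℝ} (hμ : μ ≠ 0) {n : ℕ} {r : ℝ}
    (hr : 0 < (taylorPoly μ n).eval r) :
    HasDerivAt (fun t : ℝ => 1 - (1 - t) * (taylorPoly μ n).eval t ^ μ⁻¹)
      (μ⁻¹ * ((μ + n) * taylorCoeff μ n) * r ^ n * (taylorPoly μ n).eval r ^ (μ⁻¹ - 1)) r := by
  have hroot := ((taylorPoly μ n).hasDerivAt r).rpow_const (p := μ⁻¹) (.inl hr.ne')
  have hode := one_sub_mul_aeval_derivative_taylorPoly μ n r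
  have hpow : (taylorPoly μ n).eval r ^ μ⁻¹ =
      (taylorPoly μ n).eval r ^ (μ⁻¹ - 1) * (taylorPoly μ n).eval r := by
    rw [← Real.rpow_add_one hr.ne', sub_add_cancel]
  refine ((((hasDerivAt_id r).const_sub 1).mul hroot).const_sub 1).congr_deriv ?_
  simp only [id_eq, coe_aeval_eq_eval, Algebra.algebraMap_self, RingHom.id_apply] at hode ⊢
  rw [hpow]
  generalize (taylorPoly μ n).eval r ^ (μ⁻¹ - 1) = Q
  field_simp
  linear_combination -Q * hode

theorem norm_one_sub_mul_taylorPoly_cpow_le {μ : ℝ} (hμ : 0 < μ) (hμ₁ : μ ≤ 1) (n : ℕ) {z : ℂ}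
    (hz : z ∈ ball (0 : ℂ) 1) :
    ‖1 - (1 - z) * aeval z (taylorPoly μ n) ^ ((μ⁻¹ : ℝ) : ℂ)‖ ≤
      1 - (1 - ‖z‖) * (taylorPoly μ n).eval ‖z‖ ^ μ⁻¹ := by
  have hcoeff : 0 ≤ μ⁻¹ * ((μ + n) * taylorCoeff μ n) := by
    have := taylorCoeff_pos hμ n
    positivity
  refine norm_le_of_norm_deriv_le_radial
    (f := fun w => 1 - (1 - w) * aeval w (taylorPoly μ n) ^ ((μ⁻¹ : ℝ) : ℂ))
    (g := fun r => 1 - (1 - r) * (taylorPoly μ n).eval r ^ μ⁻¹)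
    (fun w hw => hasDerivAt_one_sub_mul_taylorPoly_cpow hμ.ne'
      (aeval_taylorPoly_mem_slitPlane hμ hμ₁ n hw))
    (fun r hr => hasDerivAt_one_sub_mul_taylorPoly_rpow hμ.ne' (eval_taylorPoly_pos hμ n hr.1))
    ?_ (fun w _ => ?_) hz
  · simp [aeval_zero_taylorPoly, ← coe_aeval_eq_eval]
  · rw [norm_mul, norm_mul, norm_pow, Complex.norm_of_nonneg hcoeff, norm_cpow_real]
    have hle := norm_aeval_le_eval_norm (coeff_taylorPoly_nonneg hμ n) w
    have hexp : 0 ≤ μ⁻¹ - 1 := sub_nonneg.2 ((one_le_inv₀ hμ).2 hμ₁)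
    gcongr

theorem one_sub_mul_taylorPoly_cpow_mem_ball {μ : ℝ} (hμ : 0 < μ) (hμ₁ : μ ≤ 1) (n : ℕ) {z : ℂ}
    (hz : z ∈ ball (0 : ℂ) 1) :
    (1 - z) * aeval z (taylorPoly μ n) ^ ((μ⁻¹ : ℝ) : ℂ) ∈ ball (1 : ℂ) 1 := by
  rw [mem_ball_iff_norm']
  refine (norm_one_sub_mul_taylorPoly_cpow_le hμ hμ₁ n hz).trans_lt (sub_lt_self 1 ?_)
  exact mul_pos (sub_pos.2 (mem_ball_zero_iff.1 hz))
    (Real.rpow_pos_of_pos (eval_taylorPoly_pos hμ n (norm_nonneg z)) _)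

theorem log_one_sub_add_log_taylorPoly_mem_logDisc {μ : ℝ} (hμ : 0 < μ) (hμ₁ : μ ≤ 1) (n : ℕ)
    {z : ℂ} (hz : z ∈ ball (0 : ℂ) 1) :
    Complex.log (1 - z) + Complex.log (aeval z (taylorPoly μ n)) * (μ⁻¹ : ℝ) ∈ logDisc := by
  set L : ℂ → ℂ := fun w =>
    Complex.log (1 - w) + Complex.log (aeval w (taylorPoly μ n)) * (μ⁻¹ : ℝ) with hL
  have hdiff : DifferentiableOn ℂ L (ball 0 1) :=
    differentiableOn_log_one_sub.add (((taylorPoly μ n).differentiable_aeval.differentiableOn.clog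
      fun w hw => aeval_taylorPoly_mem_slitPlane hμ hμ₁ n hw).mul_const _)
  have hball {w : ℂ} (hw : w ∈ ball (0 : ℂ) 1) : Complex.exp (L w) ∈ ball (1 : ℂ) 1 := by
    rw [hL, Complex.exp_add, exp_log (one_sub_ne_zero_of_mem_ball hw), ← cpow_def_of_ne_zero
      (slitPlane_ne_zero (aeval_taylorPoly_mem_slitPlane hμ hμ₁ n hw))]
    exact one_sub_mul_taylorPoly_cpow_mem_ball hμ hμ₁ n hw
  have hlog := eqOn_log_exp isOpen_ball (convex_ball _ _).isPreconnected hdiff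
    (fun w hw => .inl (re_pos_of_mem_ball_one (hball hw))) (mem_ball_self one_pos)
    (by simp [hL, aeval_zero_taylorPoly])
  exact ⟨_, hball hz, hlog hz⟩

theorem one_sub_cpow_mul_taylorPoly_mem_powDisc {μ : ℝ} (hμ : 0 < μ) (hμ₁ : μ ≤ 1) (n : ℕ) {z : ℂ}
    (hz : z ∈ ball (0 : ℂ) 1) : (1 - z) ^ (μ : ℂ) * aeval z (taylorPoly μ n) ∈ powDisc μ := by
  have hmem := log_one_sub_add_log_taylorPoly_mem_logDisc hμ hμ₁ n hz
  have hS := slitPlane_ne_zero (aeval_taylorPoly_mem_slitPlane hμ hμ₁ n hz)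
  have hμ' : (μ : ℂ) ≠ 0 := ofReal_ne_zero.2 hμ.ne'
  refine ⟨_, exp_mem_ball_one hmem, ?_⟩
  simp only [cpow_def_of_ne_zero (exp_ne_zero _), log_exp_of_mem_logDisc hmem]
  rw [add_mul, ofReal_inv, inv_mul_cancel_right₀ hμ', Complex.exp_add, exp_log hS,
    cpow_def_of_ne_zero (one_sub_ne_zero_of_mem_ball hz)]

theorem one_sub_cpow_mul_sum_mem_powDisc {μ : ℝ} (hμ : 0 < μ) (hμ₁ : μ ≤ 1) {c : ℕ → ℝ} {n : ℕ}
    (hc₀ : c 0 = 1) (hc : AntitoneOn c (Set.Iic n)) (hn : 0 ≤ c n) {z : ℂ}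
    (hz : z ∈ ball (0 : ℂ) 1) :
    (1 - z) ^ (μ : ℂ) * ∑ k ∈ Finset.range (n + 1), ((c k * taylorCoeff μ k : ℝ) : ℂ) * z ^ k ∈
      powDisc μ := by
  have hsum : (1 - z) ^ (μ : ℂ) *
        ∑ k ∈ Finset.range (n + 1), ((c k * taylorCoeff μ k : ℝ) : ℂ) * z ^ k =
      ∑ k ∈ Finset.range (n + 1), c k • ((1 - z) ^ (μ : ℂ) * taylorCoeff μ k • z ^ k) := by
    rw [Finset.mul_sum]
    refine Finset.sum_congr rfl fun k _ => ?_
    rw [← mul_smul_comm, smul_smul, real_smul]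
  rw [hsum]
  refine sum_smul_mem_of_antitoneOn (convex_powDisc hμ hμ₁) hc₀ hc hn fun j _ => ?_
  rw [← Finset.mul_sum, ← aeval_taylorPoly]
  exact one_sub_cpow_mul_taylorPoly_mem_powDisc hμ hμ₁ j hz

end Taylor

section Subordination

theorem subord_one_sub_cpow_of_exp {F H : ℂ → ℂ} {ρ : ℂ} (hH : DifferentiableOn ℂ H (ball 0 1))
    (h₀ : H 0 = 0) (hD : ∀ z ∈ ball (0 : ℂ) 1, H z ∈ logDisc)
    (hF : ∀ z ∈ ball (0 : ℂ) 1, F z = Complex.exp (H z * ρ)) :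
    Subord F (fun z => (1 - z) ^ ρ) := by
  refine ⟨fun z => 1 - Complex.exp (H z), hH.cexp.const_sub 1, by simp [h₀], fun z hz => ?_,
    fun z hz => ?_⟩
  · rw [mem_ball_zero_iff, ← mem_ball_iff_norm']
    exact exp_mem_ball_one (hD z hz)
  · simp only [hF z hz, sub_sub_cancel]
    rw [cpow_def_of_ne_zero (exp_ne_zero _), log_exp_of_mem_logDisc (hD z hz)]

theorem subord_one_sub_cpow_of_le {μ ρ : ℝ} (hμ : 0 < μ) (hμρ : μ ≤ ρ) {F : ℂ → ℂ}
    (hF : Subord F (fun z => (1 - z) ^ (μ : ℂ))) : Subord F (fun z => (1 - z) ^ (ρ : ℂ)) := by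
  obtain ⟨ω, hω, hω₀, hωmem, hFω⟩ := hF
  have hρ : 0 < ρ := hμ.trans_le hμρ
  refine subord_one_sub_cpow_of_exp (H := fun z => (μ / ρ : ℝ) • Complex.log (1 - ω z))
    ((differentiableOn_log_one_sub.comp hω hωmem).const_smul (μ / ρ)) (by simp [hω₀])
    (fun z hz => ?_) (fun z hz => ?_)
  · exact convex_logDisc.smul_mem_of_zero_mem zero_mem_logDisc
      ⟨_, one_sub_mem_ball_one (hωmem z hz), rfl⟩ ⟨by positivity, (div_le_one hρ).2 hμρ⟩
  · have hρ' : (ρ : ℂ) ≠ 0 := ofReal_ne_zero.2 hρ.ne'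
    simp only [hFω z hz, real_smul, ofReal_div]
    rw [cpow_def_of_ne_zero (one_sub_ne_zero_of_mem_ball (hωmem z hz))]
    field_simp

theorem subord_one_sub_cpow_mul_of_mem_powDisc {μ ρ : ℝ} (hμ : 0 < μ) (hμ₁ : μ ≤ 1) (hμρ : μ ≤ ρ)
    {P : ℂ → ℂ} (hP : DifferentiableOn ℂ P (ball 0 1)) (hP₀ : P 0 = 1)
    (hmem : ∀ z ∈ ball (0 : ℂ) 1, (1 - z) ^ (μ : ℂ) * P z ∈ powDisc μ) :
    Subord (fun z => (1 - z) ^ (ρ : ℂ) * P z) (fun z => (1 - z) ^ (ρ : ℂ)) := by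
  have hρ : 0 < ρ := hμ.trans_le hμρ
  have hμ' : (μ : ℂ) ≠ 0 := ofReal_ne_zero.2 hμ.ne'
  have hρ' : (ρ : ℂ) ≠ 0 := ofReal_ne_zero.2 hρ.ne'
  have hcpow : DifferentiableOn ℂ (fun z : ℂ => (1 - z) ^ (μ : ℂ)) (ball 0 1) :=
    DifferentiableOn.cpow (by fun_prop) (by fun_prop) fun z hz =>
      .inl (re_pos_of_mem_ball_one (one_sub_mem_ball_one hz))
  have hlogP : DifferentiableOn ℂ (fun z => Complex.log ((1 - z) ^ (μ : ℂ) * P z)) (ball 0 1) :=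
    (hcpow.mul hP).clog fun z hz => .inl (re_pos_of_mem_powDisc hμ hμ₁ (hmem z hz))
  refine subord_one_sub_cpow_of_exp
    (H := fun z => ((ρ - μ) / ρ : ℝ) • Complex.log (1 - z) +
      (μ / ρ : ℝ) • (Complex.log ((1 - z) ^ (μ : ℂ) * P z) / μ))
    ((differentiableOn_log_one_sub.const_smul ((ρ - μ) / ρ)).add
      ((hlogP.div_const _).const_smul (μ / ρ))) (by simp [hP₀]) (fun z hz => ?_) (fun z hz => ?_)
  · exact convex_logDisc ⟨_, one_sub_mem_ball_one hz, rfl⟩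
      ((mem_powDisc_iff hμ hμ₁).1 (hmem z hz)).2 (div_nonneg (sub_nonneg.2 hμρ) hρ.le)
      (by positivity) (by rw [← add_div, sub_add_cancel, div_self hρ.ne'])
  · have hne := ((mem_powDisc_iff hμ hμ₁).1 (hmem z hz)).1
    have hexponent : (((ρ - μ) / ρ : ℝ) • Complex.log (1 - z) +
          (μ / ρ : ℝ) • (Complex.log ((1 - z) ^ (μ : ℂ) * P z) / μ)) * ρ =
        Complex.log (1 - z) * (ρ - μ) + Complex.log ((1 - z) ^ (μ : ℂ) * P z) := by
      rw [real_smul, real_smul]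
      push_cast
      field_simp
    have hz' := one_sub_ne_zero_of_mem_ball hz
    rw [hexponent, Complex.exp_add, exp_log hne, ← cpow_def_of_ne_zero hz', ← mul_assoc,
      ← cpow_add _ _ hz', sub_add_cancel]

theorem subord_one_sub_cpow_mul_sum_of_antitoneOn {μ ρ : ℝ} (hμ : 0 < μ) (hμ₁ : μ ≤ 1)
    (hμρ : μ ≤ ρ) {c : ℕ → ℝ} {n : ℕ} (hc₀ : c 0 = 1) (hc : AntitoneOn c (Set.Iic n))
    (hn : 0 ≤ c n) :
    Subord (fun z => (1 - z) ^ (ρ : ℂ) *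
        ∑ k ∈ Finset.range (n + 1), ((c k * taylorCoeff μ k : ℝ) : ℂ) * z ^ k)
      (fun z => (1 - z) ^ (ρ : ℂ)) :=
  subord_one_sub_cpow_mul_of_mem_powDisc hμ hμ₁ hμρ (by fun_prop)
    (by simp [Finset.sum_range_succ', hc₀, taylorCoeff_zero])
    fun _ hz => one_sub_cpow_mul_sum_mem_powDisc hμ hμ₁ hc₀ hc hn hz

end Subordination

section Cesaro

variable {b c : ℝ}

theorem cesB_pos (hc : 0 < c) (hcb : c ≤ b) (k : ℕ) : 0 < cesB b c k := by
  have hb : 0 < b := hc.trans_le hcb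
  cases k with
  | zero => exact one_pos
  | succ k =>
    exact div_pos (mul_pos (div_pos (poch_pos hb _) (poch_pos hc _)) (by linarith)) hb

theorem cesB_one (hb : b ≠ 0) : cesB b c 1 = (1 + b - c) / c := by
  simp only [cesB, poch, zero_add, Finset.prod_range_one, Nat.cast_zero, add_zero]
  field_simp

theorem cesB_succ_succ (b c : ℝ) (k : ℕ) :
    cesB b c (k + 2) = cesB b c (k + 1) * ((b + (k + 1 : ℕ)) / (c + (k + 1 : ℕ))) := by
  simp only [cesB, poch_succ _ (k + 1), mul_div_mul_comm]
  ring

theorem monotone_cesB (hc : 0 < c) (hcb : c ≤ b) (hcb' : 2 * c - 1 ≤ b) : Monotone (cesB b c) := by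
  refine monotone_nat_of_le_succ fun k => ?_
  cases k with
  | zero =>
    rw [cesB_one (hc.trans_le hcb).ne', le_div_iff₀ hc, cesB]
    linarith
  | succ k =>
    rw [cesB_succ_succ]
    refine le_mul_of_one_le_right (cesB_pos hc hcb _).le ?_
    rw [one_le_div (by positivity)]
    linarith

theorem subord_one_sub_cpow_mul_sigmaMu {μ ρ : ℝ} (hμ : 0 < μ) (hμ₁ : μ ≤ 1) (hμρ : μ ≤ ρ)
    (hc : 0 < c) (hcb : c ≤ b) (hcb' : 2 * c - 1 ≤ b) (n : ℕ) :
    Subord (fun z => (1 - z) ^ (ρ : ℂ) * sigmaMu b c μ n z) (fun z => (1 - z) ^ (ρ : ℂ)) := by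
  have hpos := cesB_pos hc hcb
  refine subord_one_sub_cpow_mul_sum_of_antitoneOn hμ hμ₁ hμρ
    (c := fun k => cesB b c (n - k) / cesB b c n) (div_self (hpos n).ne')
    (fun i _ j _ hij => ?_) (div_pos (hpos _) (hpos n)).le
  exact div_le_div_of_nonneg_right (monotone_cesB hc hcb hcb' (Nat.sub_le_sub_left hij n))
    (hpos n).le

end Cesaro

theorem stmt11_general (μ ρ : ℝ) (hμ : 0 < μ) (hμρ : μ ≤ ρ) :
    (∀ F : ℂ → ℂ, Subord F (fun z => (1 - z) ^ (μ : ℂ)) →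
        Subord F (fun z => (1 - z) ^ (ρ : ℂ))) ∧
    (μ ≤ 1 → ∀ b c : ℝ, b ≥ max c (2 * c - 1) → 0 < max c (2 * c - 1) → ∀ n : ℕ,
        Subord (fun z => (1 - z) ^ (ρ : ℂ) * sigmaMu b c μ n z)
          (fun z => (1 - z) ^ (ρ : ℂ))) := by
  refine ⟨fun F hF => subord_one_sub_cpow_of_le hμ hμρ hF, fun hμ₁ b c hb hpos n => ?_⟩
  have hc : 0 < c := (lt_max_iff.1 hpos).elim id fun h => by linarith
  exact subord_one_sub_cpow_mul_sigmaMu hμ hμ₁ hμρ hc ((le_max_left _ _).trans hb)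
    ((le_max_right _ _).trans hb) n

/-- If `F ≺ (1-z)^μ` with `0 < μ ≤ ρ ≤ 1` then `F ≺ (1-z)^ρ`; consequently,
for `b ≥ max{c, 2c-1} > 0`, `(1-z)^ρ σ_n^{(b-1,c)}(f_μ, z) ≺ (1-z)^ρ`. -/
theorem stmt11 (μ ρ : ℝ) (hμ : 0 < μ) (hμρ : μ ≤ ρ) (hρ : ρ ≤ 1) :
    (∀ F : ℂ → ℂ, Subord F (fun z => (1 - z) ^ (μ : ℂ)) →
        Subord F (fun z => (1 - z) ^ (ρ : ℂ))) ∧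
    (∀ b c : ℝ, b ≥ max c (2 * c - 1) → 0 < max c (2 * c - 1) → ∀ n : ℕ,
        Subord (fun z => (1 - z) ^ (ρ : ℂ) * sigmaMu b c μ n z)
          (fun z => (1 - z) ^ (ρ : ℂ))) :=
  have h := stmt11_general μ ρ hμ hμρ
  ⟨h.1, h.2 (hμρ.trans hρ)⟩
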